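/- arXiv:1404.6342 — 2 statements merged into one kernel-verified Lean document; each statement's English description precedes it below -/
import Mathlib

section
/- With b := min{2/(2γ₁² + c₁ + 1), 1/(2c₁), 1/(γ₁c₁)} and ω := b/(2 + c₁bγ₁), the modified energy G(t) := E(t) + bγF(t), where E(t) := ‖Bv(t)‖² + γ²‖v'(t)‖² and F(t) := γ⟨v(t), v'(t)⟩, satisfies G'(t) ≤ −ω·G(t) + ((b+2)/(2b))·‖f(t)‖² for all t ∈ [0,T]. -/
open Set RealInnerProductSpace

/-!
Testing the equation with `2v'` and with `bv` expresses `G'` through `v`, `v'` and `f` only. The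
first test damps `‖v'‖²`, but leaves `‖Bv‖²` undamped; the second, which comes from the cross term
`bγF`, adds the missing `-b‖Bv‖²`. Young's inequality and `‖v‖² ≤ c₁‖Bv‖²` absorb all indefinite
terms for small `b`, so that `G' ≤ -(b/2)E + ((b+2)/(2b))‖f‖²`, and `G ≤ (1 + c₁bγ₁/2)E` turns
`-(b/2)E` into `-ωG`.
-/

theorem two_mul_real_inner_le {H : Type*} [NormedAddCommGroup H] [InnerProductSpace ℝ H]
    (x y : H) {ε : ℝ} (hε : 0 < ε) : 2 * ⟪x, y⟫ ≤ ε * ‖x‖ ^ 2 + ε⁻¹ * ‖y‖ ^ 2 :=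
  calc 2 * ⟪x, y⟫ ≤ 2 * ‖x‖ * ‖y‖ := by linarith [real_inner_le_norm x y]
    _ ≤ ε * ‖x‖ ^ 2 + ε⁻¹ * ‖y‖ ^ 2 := two_mul_le_add_mul_sq hε

section DampedWave

variable {H K : Type*} [NormedAddCommGroup H] [InnerProductSpace ℝ H]
  [NormedAddCommGroup K] [InnerProductSpace ℝ K] {B : H →L[ℝ] K} {b c γ γ₁ : ℝ} {x y g : H}

/-- The energy `E` of the damped wave equation in the state with position `x` and velocity `y`. -/
def waveEnergy (B : H →L[ℝ] K) (γ : ℝ) (x y : H) : ℝ :=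
  ‖B x‖ ^ 2 + γ ^ 2 * ‖y‖ ^ 2

/-- The modified energy `G = E + bγF`, with `F = γ⟪x, y⟫`, in the state with position `x` and
velocity `y`. -/
def modifiedWaveEnergy (B : H →L[ℝ] K) (γ b : ℝ) (x y : H) : ℝ :=
  waveEnergy B γ x y + b * γ * (γ * ⟪x, y⟫)

/-- The time derivative of the modified energy along a solution of the damped wave equation that
has position `x` and velocity `y` while the force `g` acts; the acceleration is eliminated by means
of the equation. -/
def modifiedWaveEnergyRate (B : H →L[ℝ] K) (γ b : ℝ) (x y g : H) : ℝ :=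
  2 * ⟪y, g⟫ - (2 - b * γ ^ 2) * ‖y‖ ^ 2 + b * (⟪x, g⟫ - ⟪x, y⟫ - ‖B x‖ ^ 2)

theorem waveEnergy_nonneg (B : H →L[ℝ] K) (γ : ℝ) (x y : H) : 0 ≤ waveEnergy B γ x y := by
  unfold waveEnergy
  positivity

theorem two_mul_mul_inner_le_mul_waveEnergy (hc : 1 ≤ c) (hx : ‖x‖ ^ 2 ≤ c * ‖B x‖ ^ 2) :
    2 * (γ * ⟪x, y⟫) ≤ c * waveEnergy B γ x y :=
  calc 2 * (γ * ⟪x, y⟫) = 2 * ⟪x, γ • y⟫ := by rw [real_inner_smul_right]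
    _ ≤ ‖x‖ ^ 2 + ‖γ • y‖ ^ 2 := by simpa using two_mul_real_inner_le x (γ • y) one_pos
    _ = ‖x‖ ^ 2 + γ ^ 2 * ‖y‖ ^ 2 := by rw [norm_smul, mul_pow, Real.norm_eq_abs, sq_abs]
    _ ≤ c * ‖B x‖ ^ 2 + c * (γ ^ 2 * ‖y‖ ^ 2) :=
        add_le_add hx (le_mul_of_one_le_left (by positivity) hc)
    _ = c * waveEnergy B γ x y := by rw [waveEnergy, mul_add]

theorem two_mul_modifiedWaveEnergy_le (hc : 1 ≤ c) (hb : 0 ≤ b) (hγ : 0 ≤ γ) (hγ₁ : γ ≤ γ₁)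
    (hx : ‖x‖ ^ 2 ≤ c * ‖B x‖ ^ 2) :
    2 * modifiedWaveEnergy B γ b x y ≤ (2 + c * b * γ₁) * waveEnergy B γ x y :=
  calc 2 * modifiedWaveEnergy B γ b x y
      = 2 * waveEnergy B γ x y + b * γ * (2 * (γ * ⟪x, y⟫)) := by
        rw [modifiedWaveEnergy]; ring
    _ ≤ 2 * waveEnergy B γ x y + b * γ * (c * waveEnergy B γ x y) :=
        add_le_add_right (mul_le_mul_of_nonneg_left
          (two_mul_mul_inner_le_mul_waveEnergy hc hx) (by positivity)) _
    _ ≤ 2 * waveEnergy B γ x y + b * γ₁ * (c * waveEnergy B γ x y) := by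
        have := waveEnergy_nonneg B γ x y
        gcongr
    _ = (2 + c * b * γ₁) * waveEnergy B γ x y := by ring

theorem div_mul_modifiedWaveEnergy_le (hc : 1 ≤ c) (hb : 0 ≤ b) (hγ : 0 ≤ γ) (hγ₁ : γ ≤ γ₁)
    (hx : ‖x‖ ^ 2 ≤ c * ‖B x‖ ^ 2) :
    b / (2 + c * b * γ₁) * modifiedWaveEnergy B γ b x y ≤ b / 2 * waveEnergy B γ x y := by
  have hγ₁0 : 0 ≤ γ₁ := hγ.trans hγ₁
  calc b / (2 + c * b * γ₁) * modifiedWaveEnergy B γ b x y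
      = b / (2 + c * b * γ₁) / 2 * (2 * modifiedWaveEnergy B γ b x y) := by ring
    _ ≤ b / (2 + c * b * γ₁) / 2 * ((2 + c * b * γ₁) * waveEnergy B γ x y) :=
        mul_le_mul_of_nonneg_left (two_mul_modifiedWaveEnergy_le hc hb hγ hγ₁ hx) (by positivity)
    _ = b / 2 * waveEnergy B γ x y := by field_simp

theorem mul_inner_le_of_two_mul_mul_le_one (hb : 0 < b) (hbc : 2 * c * b ≤ 1)
    (hx : ‖x‖ ^ 2 ≤ c * ‖B x‖ ^ 2) :
    b * ⟪x, g⟫ ≤ b / 4 * ‖B x‖ ^ 2 + ‖g‖ ^ 2 / 2 :=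
  calc b * ⟪x, g⟫ = b / 2 * (2 * ⟪x, g⟫) := by ring
    _ ≤ b / 2 * (b * ‖x‖ ^ 2 + b⁻¹ * ‖g‖ ^ 2) := by
        gcongr
        exact two_mul_real_inner_le x g hb
    _ ≤ b / 2 * (b * (c * ‖B x‖ ^ 2) + b⁻¹ * ‖g‖ ^ 2) := by gcongr
    _ = b / 4 * (2 * c * b * ‖B x‖ ^ 2) + ‖g‖ ^ 2 / 2 := by field_simp; ring
    _ ≤ b / 4 * ‖B x‖ ^ 2 + ‖g‖ ^ 2 / 2 := by
        gcongr
        exact mul_le_of_le_one_left (by positivity) hbc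

theorem neg_inner_le_of_sq_norm_le (hc : 0 < c) (hx : ‖x‖ ^ 2 ≤ c * ‖B x‖ ^ 2) :
    -⟪x, y⟫ ≤ 1 / 4 * ‖B x‖ ^ 2 + c * ‖y‖ ^ 2 := by
  have young : 2 * ⟪-x, y⟫ ≤ (2 * c)⁻¹ * ‖-x‖ ^ 2 + (2 * c)⁻¹⁻¹ * ‖y‖ ^ 2 :=
    two_mul_real_inner_le (-x) y (by positivity)
  rw [norm_neg, inner_neg_left, inv_inv] at young
  have coercive : (2 * c)⁻¹ * ‖x‖ ^ 2 ≤ 1 / 2 * ‖B x‖ ^ 2 :=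
    calc (2 * c)⁻¹ * ‖x‖ ^ 2 ≤ (2 * c)⁻¹ * (c * ‖B x‖ ^ 2) := by gcongr
      _ = 1 / 2 * ‖B x‖ ^ 2 := by field_simp
  linarith

theorem modifiedWaveEnergyRate_le (hc : 0 < c) (hb : 0 < b)
    (hbγ : b * (3 / 2 * γ ^ 2 + c + 1) ≤ 2) (hbc : 2 * c * b ≤ 1) (hx : ‖x‖ ^ 2 ≤ c * ‖B x‖ ^ 2) :
    modifiedWaveEnergyRate B γ b x y g ≤
      -(b / 2 * waveEnergy B γ x y) + (b + 2) / (2 * b) * ‖g‖ ^ 2 := by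
  have velocity_force : 2 * ⟪y, g⟫ ≤ b * ‖y‖ ^ 2 + b⁻¹ * ‖g‖ ^ 2 := two_mul_real_inner_le y g hb
  have position_force : b * ⟪x, g⟫ ≤ b / 4 * ‖B x‖ ^ 2 + ‖g‖ ^ 2 / 2 :=
    mul_inner_le_of_two_mul_mul_le_one hb hbc hx
  have position_velocity : b * -⟪x, y⟫ ≤ b * (1 / 4 * ‖B x‖ ^ 2 + c * ‖y‖ ^ 2) :=
    mul_le_mul_of_nonneg_left (neg_inner_le_of_sq_norm_le hc hx) hb.le
  have damping : b * (3 / 2 * γ ^ 2 + c + 1) * ‖y‖ ^ 2 ≤ 2 * ‖y‖ ^ 2 := by gcongr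
  have force_coeff : (b + 2) / (2 * b) * ‖g‖ ^ 2 = ‖g‖ ^ 2 / 2 + b⁻¹ * ‖g‖ ^ 2 := by
    field_simp
  rw [force_coeff, modifiedWaveEnergyRate, waveEnergy]
  linarith

theorem hasDerivWithinAt_modifiedWaveEnergy {v v' : ℝ → H} {a : H} {s : Set ℝ} {t : ℝ}
    (hv : HasDerivWithinAt v (v' t) s t) (hv' : HasDerivWithinAt v' a s t)
    (heq : ∀ w : H, γ ^ 2 * ⟪w, a⟫ + ⟪w, v' t⟫ + ⟪B w, B (v t)⟫ = ⟪w, g⟫) :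
    HasDerivWithinAt (fun τ => modifiedWaveEnergy B γ b (v τ) (v' τ))
      (modifiedWaveEnergyRate B γ b (v t) (v' t) g) s t := by
  have hBv : HasDerivWithinAt (fun τ => B (v τ)) (B (v' t)) s t :=
    B.hasFDerivAt.comp_hasDerivWithinAt t hv
  have hE : HasDerivWithinAt (fun τ => waveEnergy B γ (v τ) (v' τ))
      (2 * ⟪B (v t), B (v' t)⟫ + γ ^ 2 * (2 * ⟪v' t, a⟫)) s t :=
    hBv.norm_sq.add (hv'.norm_sq.const_mul (γ ^ 2))
  have hF : HasDerivWithinAt (fun τ => γ * ⟪v τ, v' τ⟫) (γ * (⟪v t, a⟫ + ⟪v' t, v' t⟫)) s t :=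
    (hv.inner ℝ hv').const_mul γ
  refine (hE.add (hF.const_mul (b * γ))).congr_deriv ?_
  have test_velocity := heq (v' t)
  have test_position := heq (v t)
  rw [real_inner_self_eq_norm_sq, real_inner_comm (B (v t))] at test_velocity
  rw [real_inner_self_eq_norm_sq] at test_position
  rw [modifiedWaveEnergyRate, real_inner_self_eq_norm_sq]
  linear_combination 2 * test_velocity + b * test_position

theorem dampedWave_weak_of_symmetric {A : H →L[ℝ] H} {a : H}
    (hA : ∀ u w : H, ⟪A u, w⟫ = ⟪u, A w⟫) (heq : γ ^ 2 • a + y + A (A x) = g) (w : H) :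
    γ ^ 2 * ⟪w, a⟫ + ⟪w, y⟫ + ⟪A w, A x⟫ = ⟪w, g⟫ := by
  rw [← heq, inner_add_right, inner_add_right, real_inner_smul_right, hA]

/-- The equation is required in its weak form, tested against all `w`, which makes sense for an
operator `B` between different spaces that need not have an adjoint. -/
theorem stmt7_general {s : Set ℝ} {f v v' v'' : ℝ → H} (hc : 1 ≤ c)
    (hB : ∀ z : H, ‖z‖ ^ 2 ≤ c * ‖B z‖ ^ 2) (hγ : γ ∈ Ioc 0 γ₁)
    (hv : ∀ t ∈ s, HasDerivWithinAt v (v' t) s t)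
    (hv' : ∀ t ∈ s, HasDerivWithinAt v' (v'' t) s t)
    (heq : ∀ t ∈ s, ∀ w : H,
      γ ^ 2 * ⟪w, v'' t⟫ + ⟪w, v' t⟫ + ⟪B w, B (v t)⟫ = ⟪w, f t⟫)
    (hb : 0 < b) (hbγ : b ≤ 2 / (2 * γ₁ ^ 2 + c + 1)) (hbc : b ≤ 1 / (2 * c)) :
    ∀ t ∈ s, ∃ G't : ℝ,
      HasDerivWithinAt (fun τ => modifiedWaveEnergy B γ b (v τ) (v' τ)) G't s t ∧
      G't ≤ -(b / (2 + c * b * γ₁)) * modifiedWaveEnergy B γ b (v t) (v' t) +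
        ((b + 2) / (2 * b)) * ‖f t‖ ^ 2 := by
  intro t ht
  obtain ⟨hγ0, hγ₁⟩ := hγ
  have hc0 : 0 < c := one_pos.trans_le hc
  have hbγ' : b * (3 / 2 * γ ^ 2 + c + 1) ≤ 2 :=
    calc b * (3 / 2 * γ ^ 2 + c + 1) ≤ b * (2 * γ₁ ^ 2 + c + 1) := by gcongr; norm_num
      _ ≤ 2 := (le_div_iff₀ (by positivity)).mp hbγ
  have hbc' : 2 * c * b ≤ 1 := (le_div_iff₀' (by positivity)).mp hbc
  refine ⟨_, hasDerivWithinAt_modifiedWaveEnergy (hv t ht) (hv' t ht) (heq t ht), ?_⟩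
  have dissipation := modifiedWaveEnergyRate_le (y := v' t) (g := f t) hc0 hb hbγ' hbc' (hB (v t))
  have comparison := div_mul_modifiedWaveEnergy_le (y := v' t) hc hb.le hγ0.le hγ₁ (hB (v t))
  linarith

end DampedWave

/-- With `b := min{2/(2γ₁² + c₁ + 1), 1/(2c₁), 1/(γ₁c₁)}` and
`ω := b/(2 + c₁bγ₁)`, the modified energy `G(t) := E(t) + bγF(t)`, where
`E(t) := ‖Bv(t)‖² + γ²‖v'(t)‖²` and `F(t) := γ⟨v(t), v'(t)⟩`, satisfies
`G'(t) ≤ −ω·G(t) + ((b+2)/(2b))·‖f(t)‖²` for all `t ∈ [0,T]`. -/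
theorem stmt7
    {H : Type*} [NormedAddCommGroup H] [InnerProductSpace ℝ H] [CompleteSpace H]
    (B : H →L[ℝ] H) (hBsym : ∀ x y : H, ⟪B x, y⟫ = ⟪x, B y⟫)
    (c₁ : ℝ) (hc₁ : 1 ≤ c₁) (hB : ∀ z : H, ‖z‖ ^ 2 ≤ c₁ * ‖B z‖ ^ 2)
    (γ₁ γ T : ℝ) (hγ₁ : 0 < γ₁) (hγ : γ ∈ Ioc 0 γ₁) (hT : 0 < T)
    (f v v' v'' : ℝ → H)
    (hf : ContinuousOn f (Icc (0 : ℝ) T))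
    (hv : ∀ t ∈ Icc (0 : ℝ) T, HasDerivWithinAt v (v' t) (Icc (0 : ℝ) T) t)
    (hv' : ∀ t ∈ Icc (0 : ℝ) T, HasDerivWithinAt v' (v'' t) (Icc (0 : ℝ) T) t)
    (hv'' : ContinuousOn v'' (Icc (0 : ℝ) T))
    (heq : ∀ t ∈ Icc (0 : ℝ) T, γ ^ 2 • v'' t + v' t + B (B (v t)) = f t)
    (b ω : ℝ)
    (hb : b = min (2 / (2 * γ₁ ^ 2 + c₁ + 1)) (min (1 / (2 * c₁)) (1 / (γ₁ * c₁))))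
    (hω : ω = b / (2 + c₁ * b * γ₁))
    (E F G : ℝ → ℝ)
    (hE : E = fun t => ‖B (v t)‖ ^ 2 + γ ^ 2 * ‖v' t‖ ^ 2)
    (hF : F = fun t => γ * ⟪v t, v' t⟫)
    (hG : G = fun t => E t + b * γ * F t) :
    ∀ t ∈ Icc (0 : ℝ) T, ∃ G't : ℝ,
      HasDerivWithinAt G G't (Icc (0 : ℝ) T) t ∧
      G't ≤ -ω * G t + ((b + 2) / (2 * b)) * ‖f t‖ ^ 2 := by
  have hb0 : 0 < b := hb ▸ lt_min (by positivity) (lt_min (by positivity) (by positivity))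
  subst hE hF hG hω
  exact stmt7_general hc₁ hB hγ hv hv'
    (fun t ht => dampedWave_weak_of_symmetric hBsym (heq t ht))
    hb0 (hb.trans_le (min_le_left _ _)) (hb.trans_le ((min_le_right _ _).trans (min_le_left _ _)))
end

section
/- Assume in addition that v(0) = 0 and v'(0) = u¹ for some u¹ ∈ H, and that f has the form f(t) = −λ·g(t) − h, where λ > 0, h ∈ H, and g : [0,T] → H is continuous with ‖g(t)‖ ≤ S for all t ∈ [0,T] and some constant S ≥ 0. With b := min{2/(2γ₁² + c₁ + 1), 1/(2c₁), 1/(γ₁c₁)} and ω := b/(2 + c₁bγ₁), the solution satisfies, for all t ∈ [0,T], ‖Bv(t)‖² ≤ (b/ω)·e^{−ωt}·γ²‖u¹‖² + (2(b+2)/(bω))·(1 − e^{−ωt})·(λ²S² + ‖h‖²); in particular the right-hand side is bounded uniformly in t and tends to (2(b+2)/(bω))·(λ²S² + ‖h‖²)·(1 − e^{−ωt}) plus a term proportional to γ² as γ → 0. -/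
open Set RealInnerProductSpace

/-!
The energy `γ²‖v'‖² + ‖Bv‖²` of the damped wave equation dissipates only through `v'`. Adding the
small cross term `bγ²⟪v, v'⟫` produces `-b‖Bv‖²` in the derivative, because testing the equation
with `v` gives `⟪v, B(Bv)⟫ = ‖Bv‖²`. For small `b` the new functional `E` is still comparable with
the energy, and Young's inequality absorbs all mixed terms, so that `E' + ωE ≤ (1/2 + 1/b)‖f‖²`.
Grönwall's inequality then bounds `E`, and `‖Bv‖² ≤ 2E`.
-/

theorem le_exp_mul_add_of_deriv_add_mul_le {E E' : ℝ → ℝ} {a T ω κ : ℝ} (hω : ω ≠ 0)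
    (hE : ∀ t ∈ Icc a T, HasDerivWithinAt E (E' t) (Icc a T) t)
    (hE' : ∀ t ∈ Icc a T, E' t + ω * E t ≤ κ) {t : ℝ} (ht : t ∈ Icc a T) :
    E t ≤ Real.exp (-ω * (t - a)) * E a + κ / ω * (1 - Real.exp (-ω * (t - a))) := by
  have hright : ∀ s ∈ Ico a T, HasDerivWithinAt E (E' s) (Ici s) s := fun s hs =>
    (hE s (Ico_subset_Icc_self hs)).mono_of_mem_nhdsWithin (Icc_mem_nhdsGE_of_mem hs)
  have hgronwall : E t ≤ gronwallBound (E a) (-ω) κ (t - a) :=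
    le_gronwallBound_of_liminf_deriv_right_le (fun s hs => (hE s hs).continuousWithinAt)
      (fun s hs _ hr => (hright s hs).liminf_right_slope_le hr) le_rfl
      (fun s hs => by linarith [hE' s (Ico_subset_Icc_self hs)]) t ht
  rw [gronwallBound_of_K_ne_0 (neg_ne_zero.2 hω)] at hgronwall
  refine hgronwall.trans_eq ?_
  ring

section Young

variable {H : Type*} [NormedAddCommGroup H] [InnerProductSpace ℝ H]

theorem two_mul_abs_real_inner_le {k : ℝ} (hk : 0 < k) (x y : H) :
    2 * |⟪x, y⟫| ≤ k * ‖x‖ ^ 2 + k⁻¹ * ‖y‖ ^ 2 :=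
  calc 2 * |⟪x, y⟫| ≤ 2 * (‖x‖ * ‖y‖) := by gcongr; exact abs_real_inner_le_norm x y
    _ = 2 * ‖x‖ * ‖y‖ := by ring
    _ ≤ k * ‖x‖ ^ 2 + k⁻¹ * ‖y‖ ^ 2 := two_mul_le_add_mul_sq hk

theorem abs_real_inner_le_of_norm_sq_le {c q : ℝ} (hc : 0 < c) {x : H} (hx : ‖x‖ ^ 2 ≤ c * q)
    (y : H) : |⟪x, y⟫| ≤ q / 4 + c * ‖y‖ ^ 2 := by
  have hyoung := two_mul_abs_real_inner_le (k := (2 * c)⁻¹) (by positivity) x y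
  have hq : (2 * c)⁻¹ * ‖x‖ ^ 2 ≤ q / 2 :=
    calc (2 * c)⁻¹ * ‖x‖ ^ 2 ≤ (2 * c)⁻¹ * (c * q) := by gcongr
      _ = q / 2 := by field_simp
  rw [inv_inv] at hyoung
  linarith

end Young

theorem norm_neg_smul_sub_sq_le {E : Type*} [SeminormedAddCommGroup E] [NormedSpace ℝ E]
    (a : ℝ) {S : ℝ} {x : E} (hx : ‖x‖ ≤ S) (y : E) :
    ‖-(a • x) - y‖ ^ 2 ≤ 2 * (a ^ 2 * S ^ 2 + ‖y‖ ^ 2) :=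
  calc ‖-(a • x) - y‖ ^ 2 ≤ (‖-(a • x)‖ + ‖y‖) ^ 2 := by gcongr; exact norm_sub_le _ _
    _ ≤ 2 * (‖-(a • x)‖ ^ 2 + ‖y‖ ^ 2) := add_sq_le
    _ = 2 * (a ^ 2 * ‖x‖ ^ 2 + ‖y‖ ^ 2) := by
      rw [norm_neg, norm_smul, mul_pow, Real.norm_eq_abs, sq_abs]
    _ ≤ 2 * (a ^ 2 * S ^ 2 + ‖y‖ ^ 2) := by gcongr

section ModifiedEnergy

variable {H K : Type*} [NormedAddCommGroup H] [InnerProductSpace ℝ H]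
  [NormedAddCommGroup K] [InnerProductSpace ℝ K]

/-- The energy `γ²‖p‖² + ‖Bx‖²` of the state with position `x` and velocity `p`, perturbed by the
cross term `bγ²⟪x, p⟫`; it is the Lyapunov functional of the damped wave equation. -/
noncomputable def modifiedEnergy (B : H →L[ℝ] K) (γ b : ℝ) (x p : H) : ℝ :=
  γ ^ 2 * ‖p‖ ^ 2 + ‖B x‖ ^ 2 + b * γ ^ 2 * ⟪x, p⟫

/-- The time derivative of `modifiedEnergy` along `γ²v'' + v' + Av = y`, where `A = B*B`, in a state
with position `x` and velocity `p`; the equation has been used to eliminate `v''`. -/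
noncomputable def modifiedEnergyRate (B : H →L[ℝ] K) (γ b : ℝ) (x p y : H) : ℝ :=
  2 * (⟪p, y⟫ - ‖p‖ ^ 2) + b * (γ ^ 2 * ‖p‖ ^ 2 - ‖B x‖ ^ 2 - ⟪x, p⟫ + ⟪x, y⟫)

variable {B : H →L[ℝ] K} {γ b c : ℝ}

theorem hasDerivWithinAt_modifiedEnergy {A : H → H} (hA : ∀ x y, ⟪x, A y⟫ = ⟪B x, B y⟫)
    {v v' : ℝ → H} {a y : H} {s : Set ℝ} {t : ℝ} (hv : HasDerivWithinAt v (v' t) s t)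
    (hv' : HasDerivWithinAt v' a s t) (heq : γ ^ 2 • a + v' t + A (v t) = y) :
    HasDerivWithinAt (fun r => modifiedEnergy B γ b (v r) (v' r))
      (modifiedEnergyRate B γ b (v t) (v' t) y) s t := by
  have hBv : HasDerivWithinAt (fun r => B (v r)) (B (v' t)) s t :=
    B.hasFDerivAt.comp_hasDerivWithinAt t hv
  have hderiv := ((hv'.norm_sq.const_mul (γ ^ 2)).add hBv.norm_sq).add
    ((hv.inner ℝ hv').const_mul (b * γ ^ 2))
  have htest : ∀ w, γ ^ 2 * ⟪w, a⟫ + ⟪w, v' t⟫ + ⟪B w, B (v t)⟫ = ⟪w, y⟫ := fun w => by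
    rw [← heq, inner_add_right, inner_add_right, inner_smul_right, hA]
  have hvelocity := htest (v' t)
  have hposition := htest (v t)
  rw [real_inner_self_eq_norm_sq] at hvelocity hposition
  refine hderiv.congr_deriv ?_
  rw [modifiedEnergyRate, real_inner_self_eq_norm_sq, real_inner_comm (B (v' t)) (B (v t))]
  linear_combination 2 * hvelocity + b * hposition

theorem norm_sq_le_two_mul_modifiedEnergy (hb : 0 ≤ b) (hbγ : b * γ ^ 2 ≤ 1) (hbc : b * c ≤ 1)
    {x : H} (hx : ‖x‖ ^ 2 ≤ c * ‖B x‖ ^ 2) (p : H) :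
    ‖B x‖ ^ 2 ≤ 2 * modifiedEnergy B γ b x p := by
  have hcross : 0 ≤ b ^ 2 / 4 * ‖x‖ ^ 2 + b * ⟪x, p⟫ + ‖p‖ ^ 2 :=
    calc 0 ≤ ‖(b / 2) • x + p‖ ^ 2 := sq_nonneg _
      _ = b ^ 2 / 4 * ‖x‖ ^ 2 + b * ⟪x, p⟫ + ‖p‖ ^ 2 := by
        rw [norm_add_sq_real, norm_smul, mul_pow, Real.norm_eq_abs, sq_abs, real_inner_smul_left]
        ring
  have hsmall : b ^ 2 * γ ^ 2 * ‖x‖ ^ 2 ≤ ‖B x‖ ^ 2 :=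
    calc b ^ 2 * γ ^ 2 * ‖x‖ ^ 2 ≤ b ^ 2 * γ ^ 2 * (c * ‖B x‖ ^ 2) := by gcongr
      _ = (b * c) * ((b * γ ^ 2) * ‖B x‖ ^ 2) := by ring
      _ ≤ 1 * (1 * ‖B x‖ ^ 2) := by gcongr
      _ = ‖B x‖ ^ 2 := by ring
  rw [modifiedEnergy]
  linarith [mul_nonneg (sq_nonneg γ) hcross, sq_nonneg ‖B x‖]

theorem modifiedEnergy_le (hb : 0 ≤ b) (hγ : 0 ≤ γ) {x : H} (hx : ‖x‖ ^ 2 ≤ c * ‖B x‖ ^ 2)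
    (p : H) : modifiedEnergy B γ b x p ≤
      (1 + c * b * γ / 2) * ‖B x‖ ^ 2 + (1 + b * γ / 2) * (γ ^ 2 * ‖p‖ ^ 2) := by
  have hcross : 0 ≤ ‖x‖ ^ 2 - 2 * (γ * ⟪x, p⟫) + γ ^ 2 * ‖p‖ ^ 2 :=
    calc 0 ≤ ‖x - γ • p‖ ^ 2 := sq_nonneg _
      _ = ‖x‖ ^ 2 - 2 * (γ * ⟪x, p⟫) + γ ^ 2 * ‖p‖ ^ 2 := by
        rw [norm_sub_sq_real, norm_smul, mul_pow, Real.norm_eq_abs, sq_abs, real_inner_smul_right]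
  have hbγ : 0 ≤ b * γ := mul_nonneg hb hγ
  rw [modifiedEnergy]
  linarith [mul_nonneg hbγ hcross, mul_le_mul_of_nonneg_left hx hbγ]

theorem modifiedEnergyRate_le (hb : 0 < b) (hc : 0 < c) {x : H} (hx : ‖x‖ ^ 2 ≤ c * ‖B x‖ ^ 2)
    (p y : H) : modifiedEnergyRate B γ b x p y ≤
      (b * (γ ^ 2 + c + 1) - 2) * ‖p‖ ^ 2 - b / 2 * ‖B x‖ ^ 2 + (b * c + b⁻¹) * ‖y‖ ^ 2 := by
  have hpy : 2 * ⟪p, y⟫ ≤ b * ‖p‖ ^ 2 + b⁻¹ * ‖y‖ ^ 2 := by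
    linarith [two_mul_abs_real_inner_le hb p y, le_abs_self ⟪p, y⟫]
  have hxp : -⟪x, p⟫ ≤ ‖B x‖ ^ 2 / 4 + c * ‖p‖ ^ 2 :=
    (neg_le_abs _).trans (abs_real_inner_le_of_norm_sq_le hc hx p)
  have hxy : ⟪x, y⟫ ≤ ‖B x‖ ^ 2 / 4 + c * ‖y‖ ^ 2 :=
    (le_abs_self _).trans (abs_real_inner_le_of_norm_sq_le hc hx y)
  have := mul_le_mul_of_nonneg_left (add_le_add hxp hxy) hb.le
  rw [modifiedEnergyRate]
  linarith

theorem modifiedEnergyRate_add_mul_modifiedEnergy_le {ω : ℝ} (hb : 0 < b) (hc : 0 < c)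
    (hγ : 0 ≤ γ) (hω : 0 ≤ ω) (hbγ : b * (2 * γ ^ 2 + c + 1) ≤ 2) (hbc : b * (2 * c) ≤ 1)
    (hωb : ω * (2 + c * b * γ) ≤ b) {x : H} (hx : ‖x‖ ^ 2 ≤ c * ‖B x‖ ^ 2) (p y : H) :
    modifiedEnergyRate B γ b x p y + ω * modifiedEnergy B γ b x p ≤
      (1 / 2 + b⁻¹) * ‖y‖ ^ 2 := by
  have hbγ_le : b * γ ≤ 2 := by nlinarith [sq_nonneg (γ - 1), mul_pos hb hc]
  have hω_le : ω * 2 ≤ b :=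
    (mul_le_mul_of_nonneg_left (le_add_of_nonneg_right (by positivity)) hω).trans hωb
  have hposition : ω * (1 + c * b * γ / 2) * ‖B x‖ ^ 2 ≤ b / 2 * ‖B x‖ ^ 2 := by
    gcongr
    linarith
  have hcoeff : ω * (1 + b * γ / 2) ≤ b :=
    (mul_le_mul_of_nonneg_left (by linarith) hω).trans hω_le
  have hvelocity : (b * (γ ^ 2 + c + 1) - 2 + ω * (1 + b * γ / 2) * γ ^ 2) * ‖p‖ ^ 2 ≤ 0 := by
    refine mul_nonpos_of_nonpos_of_nonneg ?_ (sq_nonneg _)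
    linarith [mul_le_mul_of_nonneg_right hcoeff (sq_nonneg γ)]
  have hforce : b * c * ‖y‖ ^ 2 ≤ 1 / 2 * ‖y‖ ^ 2 := by
    gcongr
    linarith
  have henergy := mul_le_mul_of_nonneg_left (modifiedEnergy_le hb.le hγ hx p) hω
  linarith [modifiedEnergyRate_le (γ := γ) hb hc hx p y]

theorem modifiedEnergy_le_exp_mul_add {A : H → H} (hA : ∀ x y, ⟪x, A y⟫ = ⟪B x, B y⟫)
    (hB : ∀ z, ‖z‖ ^ 2 ≤ c * ‖B z‖ ^ 2) {f v v' v'' : ℝ → H} {T : ℝ}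
    (hv : ∀ t ∈ Icc 0 T, HasDerivWithinAt v (v' t) (Icc 0 T) t)
    (hv' : ∀ t ∈ Icc 0 T, HasDerivWithinAt v' (v'' t) (Icc 0 T) t)
    (heq : ∀ t ∈ Icc 0 T, γ ^ 2 • v'' t + v' t + A (v t) = f t)
    {M : ℝ} (hf : ∀ t ∈ Icc 0 T, ‖f t‖ ^ 2 ≤ M)
    {ω : ℝ} (hb : 0 < b) (hc : 0 < c) (hγ : 0 ≤ γ) (hω : 0 < ω)
    (hbγ : b * (2 * γ ^ 2 + c + 1) ≤ 2) (hbc : b * (2 * c) ≤ 1)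
    (hωb : ω * (2 + c * b * γ) ≤ b) {t : ℝ} (ht : t ∈ Icc 0 T) :
    modifiedEnergy B γ b (v t) (v' t) ≤
      Real.exp (-ω * t) * modifiedEnergy B γ b (v 0) (v' 0) +
        (1 / 2 + b⁻¹) * M / ω * (1 - Real.exp (-ω * t)) := by
  have hderiv : ∀ s ∈ Icc 0 T, HasDerivWithinAt (fun r => modifiedEnergy B γ b (v r) (v' r))
      (modifiedEnergyRate B γ b (v s) (v' s) (f s)) (Icc 0 T) s := fun s hs =>
    hasDerivWithinAt_modifiedEnergy hA (hv s hs) (hv' s hs) (heq s hs)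
  have hdissipation : ∀ s ∈ Icc 0 T, modifiedEnergyRate B γ b (v s) (v' s) (f s) +
      ω * modifiedEnergy B γ b (v s) (v' s) ≤ (1 / 2 + b⁻¹) * M := fun s hs =>
    (modifiedEnergyRate_add_mul_modifiedEnergy_le hb hc hγ hω.le hbγ hbc hωb (hB _) _ _).trans
      (mul_le_mul_of_nonneg_left (hf s hs) (by positivity))
  simpa only [sub_zero] using le_exp_mul_add_of_deriv_add_mul_le hω.ne' hderiv hdissipation ht

end ModifiedEnergy

theorem stmt11_general
    {H K : Type*} [NormedAddCommGroup H] [InnerProductSpace ℝ H]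
    [NormedAddCommGroup K] [InnerProductSpace ℝ K]
    (A : H → H) (B : H →L[ℝ] K) (hA : ∀ x y, ⟪x, A y⟫ = ⟪B x, B y⟫)
    {c γ₁ γ T : ℝ} (hc : 0 < c) (hB : ∀ z, ‖z‖ ^ 2 ≤ c * ‖B z‖ ^ 2) (hγ : γ ∈ Icc 0 γ₁)
    {f v v' v'' : ℝ → H}
    (hv : ∀ t ∈ Icc 0 T, HasDerivWithinAt v (v' t) (Icc 0 T) t)
    (hv' : ∀ t ∈ Icc 0 T, HasDerivWithinAt v' (v'' t) (Icc 0 T) t)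
    (heq : ∀ t ∈ Icc 0 T, γ ^ 2 • v'' t + v' t + A (v t) = f t)
    {M : ℝ} (hf : ∀ t ∈ Icc 0 T, ‖f t‖ ^ 2 ≤ M)
    {b ω : ℝ} (hb₀ : 0 < b) (hb : b ≤ min (2 / (2 * γ₁ ^ 2 + c + 1)) (1 / (2 * c)))
    (hω : ω = b / (2 + c * b * γ₁)) {t : ℝ} (ht : t ∈ Icc 0 T) :
    ‖B (v t)‖ ^ 2 ≤ b / ω * Real.exp (-ω * t) * modifiedEnergy B γ b (v 0) (v' 0) +
      (b + 2) / (b * ω) * (1 - Real.exp (-ω * t)) * M := by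
  obtain ⟨hγ₀, hγ_le⟩ := hγ
  have hγ₁ : 0 ≤ γ₁ := hγ₀.trans hγ_le
  obtain ⟨hbγ₁, hbc⟩ := le_min_iff.1 hb
  rw [le_div_iff₀ (by positivity)] at hbγ₁ hbc
  have hbγ : b * (2 * γ ^ 2 + c + 1) ≤ 2 := le_trans (by gcongr) hbγ₁
  have hω₀ : 0 < ω := by rw [hω]; positivity
  have hb_div : b / ω = 2 + c * b * γ₁ := by rw [hω, div_div_cancel₀ hb₀.ne']
  have hωb : ω * (2 + c * b * γ) ≤ b := by
    rw [← le_div_iff₀' hω₀, hb_div]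
    gcongr
  have hlower : ∀ s, ‖B (v s)‖ ^ 2 ≤ 2 * modifiedEnergy B γ b (v s) (v' s) := fun s =>
    norm_sq_le_two_mul_modifiedEnergy hb₀.le (by linarith [mul_pos hb₀ hc])
      (by linarith [mul_pos hb₀ hc]) (hB _) _
  have hinitial : 0 ≤ modifiedEnergy B γ b (v 0) (v' 0) := by
    linarith [hlower 0, sq_nonneg ‖B (v 0)‖]
  calc ‖B (v t)‖ ^ 2 ≤ 2 * modifiedEnergy B γ b (v t) (v' t) := hlower t
    _ ≤ 2 * (Real.exp (-ω * t) * modifiedEnergy B γ b (v 0) (v' 0) +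
          (1 / 2 + b⁻¹) * M / ω * (1 - Real.exp (-ω * t))) := by
      gcongr
      exact modifiedEnergy_le_exp_mul_add hA hB hv hv' heq hf hb₀ hc hγ₀ hω₀ hbγ hbc hωb ht
    _ = 2 * Real.exp (-ω * t) * modifiedEnergy B γ b (v 0) (v' 0) +
          (b + 2) / (b * ω) * (1 - Real.exp (-ω * t)) * M := by
      field_simp
    _ ≤ b / ω * Real.exp (-ω * t) * modifiedEnergy B γ b (v 0) (v' 0) +
          (b + 2) / (b * ω) * (1 - Real.exp (-ω * t)) * M := by
      rw [hb_div]
      gcongr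
      exact le_add_of_nonneg_right (by positivity)

/-- Assume in addition that `v(0) = 0` and `v'(0) = u1` for some `u1 ∈ H`,
and that `f` has the form `f(t) = −λ·g(t) − h`, where `λ > 0`, `h ∈ H`, and
`g : [0,T] → H` is continuous with `‖g(t)‖ ≤ S` on `[0,T]` for some `S ≥ 0`.
With `b := min{2/(2γ₁² + c₁ + 1), 1/(2c₁), 1/(γ₁c₁)}` and `ω := b/(2 + c₁bγ₁)`,
the solution satisfies, for all `t ∈ [0,T]`,
`‖Bv(t)‖² ≤ (b/ω)·e^{−ωt}·γ²‖u1‖² + (2(b+2)/(bω))·(1 − e^{−ωt})·(λ²S² + ‖h‖²)`. -/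
theorem stmt11
    {H : Type*} [NormedAddCommGroup H] [InnerProductSpace ℝ H] [CompleteSpace H]
    (B : H →L[ℝ] H) (hBsym : ∀ x y : H, ⟪B x, y⟫ = ⟪x, B y⟫)
    (c₁ : ℝ) (hc₁ : 1 ≤ c₁) (hB : ∀ z : H, ‖z‖ ^ 2 ≤ c₁ * ‖B z‖ ^ 2)
    (γ₁ γ T : ℝ) (hγ₁ : 0 < γ₁) (hγ : γ ∈ Ioc 0 γ₁) (hT : 0 < T)
    (f v v' v'' : ℝ → H)
    (hf : ContinuousOn f (Icc (0 : ℝ) T))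
    (hv : ∀ t ∈ Icc (0 : ℝ) T, HasDerivWithinAt v (v' t) (Icc (0 : ℝ) T) t)
    (hv' : ∀ t ∈ Icc (0 : ℝ) T, HasDerivWithinAt v' (v'' t) (Icc (0 : ℝ) T) t)
    (hv'' : ContinuousOn v'' (Icc (0 : ℝ) T))
    (heq : ∀ t ∈ Icc (0 : ℝ) T, γ ^ 2 • v'' t + v' t + B (B (v t)) = f t)
    (u1 : H) (hv0 : v 0 = 0) (hv'0 : v' 0 = u1)
    (lam : ℝ) (hlam : 0 < lam) (h : H) (g : ℝ → H) (S : ℝ) (hS : 0 ≤ S)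
    (hg : ContinuousOn g (Icc (0 : ℝ) T))
    (hgS : ∀ t ∈ Icc (0 : ℝ) T, ‖g t‖ ≤ S)
    (hfform : ∀ t ∈ Icc (0 : ℝ) T, f t = -(lam • g t) - h)
    (b ω : ℝ)
    (hb : b = min (2 / (2 * γ₁ ^ 2 + c₁ + 1)) (min (1 / (2 * c₁)) (1 / (γ₁ * c₁))))
    (hω : ω = b / (2 + c₁ * b * γ₁)) :
    ∀ t ∈ Icc (0 : ℝ) T,
      ‖B (v t)‖ ^ 2 ≤ (b / ω) * Real.exp (-ω * t) * (γ ^ 2 * ‖u1‖ ^ 2) +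
        (2 * (b + 2) / (b * ω)) * (1 - Real.exp (-ω * t)) *
          (lam ^ 2 * S ^ 2 + ‖h‖ ^ 2) := by
  refine fun t ht => (stmt11_general (B ∘ B) B (fun x y => (hBsym x (B y)).symm) (by positivity) hB
    (Ioc_subset_Icc_self hγ) hv hv' heq
    (fun s hs => hfform s hs ▸ norm_neg_smul_sub_sq_le lam (hgS s hs) h) (hb ▸ by positivity)
    (hb.le.trans (min_le_min_left _ (min_le_left _ _))) hω ht).trans_eq ?_
  simp only [modifiedEnergy, hv0, hv'0, map_zero, norm_zero, inner_zero_left]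
  ring
end
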